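/- Let d ≥ 2 and let ψ = Σ_{i} a_i |ii⟩ be a unit vector in ℂ^d ⊗ ℂ^d with a_i ≥ 0 and Σ_i a_i² = 1. Then: (a) the matrix ψψ† + Σ_{i≠j} a_i a_j |ij⟩⟨ij| is separable; and (b) for every positive semidefinite matrix σ on ℂ^d ⊗ ℂ^d with Tr σ = 1 and every t ≥ 0, if ψψ† + t·σ is separable then t ≥ (Σ_i a_i)² − 1. Hence the generalised robustness (and the robustness) of ψ equals (Σ_i a_i)² − 1. -/

import Mathlib

open Matrix BigOperators Kronecker ComplexOrder

/-- The d×d matrix `M_v` associated with a vector `v` on ℂ^d ⊗ ℂ^d, `(M_v)_{ij} = v (i,j)`. -/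
def toMat (d : ℕ) (v : Fin d × Fin d → ℂ) : Matrix (Fin d) (Fin d) ℂ :=
  Matrix.of fun i j => v (i, j)

/-- `ρ` has Schmidt number at most `n`: it is a finite sum of `w wᴴ` with each `w` of
Schmidt rank (i.e. rank of the associated d×d matrix) at most `n`. -/
def SchmidtNumberLE (d : ℕ) (ρ : Matrix (Fin d × Fin d) (Fin d × Fin d) ℂ) (n : ℕ) : Prop :=
  ∃ (k : ℕ) (w : Fin k → (Fin d × Fin d → ℂ)),
    (∀ i, (toMat d (w i)).rank ≤ n) ∧
    ρ = ∑ i, Matrix.vecMulVec (w i) (star (w i))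

/-- The vector `Σ_i a_i |ii⟩`. -/
noncomputable def ketDiag (d : ℕ) (a : Fin d → ℝ) : Fin d × Fin d → ℂ :=
  fun p => if p.1 = p.2 then ((a p.1 : ℝ) : ℂ) else 0

/-!
Put `Ω = Σ_i |ii⟩`. A vector `w` has overlap `⟨Ω, w⟩ = tr M_w`, and if `M_w` has rank one then
Cauchy–Schwarz gives `|tr M_w|² ≤ ‖w‖²`; hence `⟨Ω|ρ|Ω⟩ ≤ tr ρ` for every separable `ρ`. Evaluated
on `ψψ† + tσ` this reads `(Σ_i a_i)² + t⟨Ω|σ|Ω⟩ ≤ 1 + t`, which is the lower bound.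

Conversely, the separable matrix is an average over random phases: if `ζ_i` are independent uniform
cube roots of unity, then `E[ζ_i ζ̄_j ζ̄_k ζ_l]` is `1` when `(i, k) = (j, l)` or `(i, j) = (k, l)`
and `0` otherwise, so averaging the projections on `Σ_{i,j} √(a_i a_j) ζ_i ζ̄_j |ij⟩`, which are
product vectors, leaves exactly `ψψ† + Σ_{i≠j} a_i a_j |ij⟩⟨ij|`.
-/

section RankOne

variable {m n K : Type*} [Fintype n]

lemma exists_eq_vecMulVec_of_rank_le_one [Field K] {M : Matrix m n K} (hM : M.rank ≤ 1) :
    ∃ (u : m → K) (v : n → K), M = vecMulVec u v := by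
  classical
  rw [Matrix.rank, finrank_le_one_iff] at hM
  obtain ⟨u, hu⟩ := hM
  choose v hv using fun j => hu ⟨M.mulVecLin (Pi.single j 1), LinearMap.mem_range_self _ _⟩
  refine ⟨u, v, Matrix.ext fun i j => ?_⟩
  have hcol : v j * (u : m → K) i = M i j := by
    simpa using congrFun (congrArg Subtype.val (hv j)) i
  rw [vecMulVec_apply, ← hcol, mul_comm]

lemma norm_trace_sq_le_of_rank_le_one [NormedField K] {M : Matrix n n K} (hM : M.rank ≤ 1) :
    ‖M.trace‖ ^ 2 ≤ ∑ i, ∑ j, ‖M i j‖ ^ 2 := by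
  obtain ⟨u, v, rfl⟩ := exists_eq_vecMulVec_of_rank_le_one hM
  calc ‖(vecMulVec u v).trace‖ ^ 2
      = ‖∑ i, u i * v i‖ ^ 2 := by rw [trace_vecMulVec, dotProduct]
    _ ≤ (∑ i, ‖u i‖ * ‖v i‖) ^ 2 := by
      gcongr
      exact norm_sum_le_of_le _ fun i _ => norm_mul_le _ _
    _ ≤ (∑ i, ‖u i‖ ^ 2) * ∑ j, ‖v j‖ ^ 2 := Finset.sum_mul_sq_le_sq_mul_sq _ _ _
    _ = ∑ i, ∑ j, ‖vecMulVec u v i j‖ ^ 2 := by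
      simp only [vecMulVec_apply, norm_mul, mul_pow, Finset.sum_mul_sum]

lemma dotProduct_vecMulVec_star_mulVec [RCLike K] (v w : n → K) :
    star v ⬝ᵥ vecMulVec w (star w) *ᵥ v = ((‖star v ⬝ᵥ w‖ ^ 2 : ℝ) : K) := by
  have hconj : star w ⬝ᵥ v = star (star v ⬝ᵥ w) := star_dotProduct w v
  rw [vecMulVec_mulVec, dotProduct_smul, hconj, op_smul_eq_mul, RCLike.star_def, RCLike.mul_conj,
    RCLike.ofReal_pow]

lemma trace_vecMulVec_self_star [RCLike K] (w : n → K) :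
    (vecMulVec w (star w)).trace = ((∑ p, ‖w p‖ ^ 2 : ℝ) : K) := by
  simp [trace_vecMulVec, dotProduct, RCLike.mul_conj]

end RankOne

section PhaseAverage

variable {ι : Type*}

lemma forall_sub_sub_add_eq_zero_iff {R : Type*} [Ring R] (h2 : (2 : R) ≠ 0) {i j k l : ι} :
    (∀ x : ι → R, x i - x j - x k + x l = 0) ↔ (i = j ∧ k = l) ∨ (i = k ∧ j = l) := by
  classical
  have hR : Nontrivial R := ⟨2, 0, h2⟩
  have eq_of_forall {p q : ι} (hpq : ∀ x : ι → R, x p = x q) : p = q := by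
    by_contra hne
    simpa [Pi.single_eq_of_ne' hne] using hpq (Pi.single p 1)
  refine ⟨fun h => ?_, ?_⟩
  · have hi : i = j ∨ i = k := by
      by_contra! hne
      have hx := h (Pi.single i 1)
      rw [Pi.single_eq_same, Pi.single_eq_of_ne' hne.1, Pi.single_eq_of_ne' hne.2] at hx
      obtain rfl | hil := eq_or_ne i l
      · exact h2 (by simpa [one_add_one_eq_two] using hx)
      · simp [Pi.single_eq_of_ne' hil] at hx
    obtain rfl | rfl := hi
    · exact .inl ⟨rfl, eq_of_forall fun x => by simpa [neg_add_eq_zero] using h x⟩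
    · exact .inr ⟨rfl, eq_of_forall fun x => by simpa [neg_add_eq_zero] using h x⟩
  · rintro (⟨rfl, rfl⟩ | ⟨rfl, rfl⟩) x <;> abel

/-- The additive character `x ↦ exp (2πi (x i - x j - x k + x l) / N)` of `ι → ZMod N`; its mean is
the fourth moment `E[ζ_i ζ̄_j ζ̄_k ζ_l]` of independent uniform `N`-th roots of unity. -/
noncomputable def phaseChar (N : ℕ) [NeZero N] (i j k l : ι) : AddChar (ι → ZMod N) ℂ :=
  ZMod.stdAddChar.compAddMonoidHom
    (Pi.evalAddMonoidHom (fun _ => ZMod N) i - Pi.evalAddMonoidHom _ j - Pi.evalAddMonoidHom _ k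
      + Pi.evalAddMonoidHom _ l)

variable {N : ℕ} [NeZero N]

lemma phaseChar_apply (i j k l : ι) (x : ι → ZMod N) :
    phaseChar N i j k l x = ZMod.stdAddChar (x i - x j - x k + x l) :=
  rfl

lemma phaseChar_eq_zero_iff (h2 : (2 : ZMod N) ≠ 0) {i j k l : ι} :
    phaseChar N i j k l = 0 ↔ (i = j ∧ k = l) ∨ (i = k ∧ j = l) := by
  rw [← forall_sub_sub_add_eq_zero_iff h2, AddChar.eq_zero_iff]
  exact forall_congr' fun x => by
    rw [phaseChar_apply, ← AddChar.map_zero_eq_one (ZMod.stdAddChar (N := N)),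
      ZMod.injective_stdAddChar.eq_iff]

lemma sum_phaseChar [Fintype ι] [DecidableEq ι] (h2 : (2 : ZMod N) ≠ 0) (i j k l : ι) :
    ∑ x, phaseChar N i j k l x
      = if (i = j ∧ k = l) ∨ (i = k ∧ j = l) then (N : ℂ) ^ Fintype.card ι else 0 := by
  classical
  simp only [AddChar.sum_eq_ite, phaseChar_eq_zero_iff h2, Fintype.card_fun, ZMod.card,
    Nat.cast_pow]

end PhaseAverage

section Separable

variable {d n : ℕ}

lemma schmidtNumberLE_sum_vecMulVec {ι : Type*} [Fintype ι] {w : ι → Fin d × Fin d → ℂ}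
    (hw : ∀ i, (toMat d (w i)).rank ≤ n) :
    SchmidtNumberLE d (∑ i, vecMulVec (w i) (star (w i))) n :=
  ⟨Fintype.card ι, w ∘ (Fintype.equivFin ι).symm, fun _ => hw _,
    ((Fintype.equivFin ι).symm.sum_comp fun i => vecMulVec (w i) (star (w i))).symm⟩

lemma rank_toMat_smul_le (c : ℂ) (w : Fin d × Fin d → ℂ) :
    (toMat d (c • w)).rank ≤ (toMat d w).rank := by
  have hsmul : toMat d (c • w) = toMat d w * c • (1 : Matrix (Fin d) (Fin d) ℂ) := by
    rw [Matrix.mul_smul, Matrix.mul_one]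
    rfl
  exact hsmul ▸ rank_mul_le_left _ _

lemma SchmidtNumberLE.smul {ρ : Matrix (Fin d × Fin d) (Fin d × Fin d) ℂ}
    (hρ : SchmidtNumberLE d ρ n) {r : ℝ} (hr : 0 ≤ r) : SchmidtNumberLE d (r • ρ) n := by
  obtain ⟨k, w, hw, rfl⟩ := hρ
  refine ⟨k, fun m => (√r : ℂ) • w m, fun m => (rank_toMat_smul_le _ _).trans (hw m), ?_⟩
  simp [Finset.smul_sum, smul_vecMulVec, vecMulVec_smul, smul_smul, Real.mul_self_sqrt hr]

lemma star_ketDiag (a : Fin d → ℝ) : star (ketDiag d a) = ketDiag d a := by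
  ext p
  by_cases hp : p.1 = p.2 <;> simp [ketDiag, hp]

lemma sum_norm_sq_ketDiag (a : Fin d → ℝ) : ∑ p, ‖ketDiag d a p‖ ^ 2 = ∑ i, a i ^ 2 := by
  simp [Fintype.sum_prod_type, ketDiag, apply_ite]

lemma trace_toMat_ketDiag (a : Fin d → ℝ) : (toMat d (ketDiag d a)).trace = (∑ i, a i : ℝ) := by
  simp [Matrix.trace, toMat, ketDiag]

lemma ketDiag_one_dotProduct (w : Fin d × Fin d → ℂ) :
    ketDiag d 1 ⬝ᵥ w = (toMat d w).trace := by
  simp [dotProduct, Fintype.sum_prod_type, ketDiag, Matrix.trace, toMat]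

lemma ketDiag_one_dotProduct_vecMulVec_mulVec (w : Fin d × Fin d → ℂ) :
    star (ketDiag d 1) ⬝ᵥ vecMulVec w (star w) *ᵥ ketDiag d 1
      = ((‖(toMat d w).trace‖ ^ 2 : ℝ) : ℂ) := by
  rw [dotProduct_vecMulVec_star_mulVec, star_ketDiag, ketDiag_one_dotProduct]
  rfl

lemma norm_trace_toMat_sq_le_of_rank_le_one {w : Fin d × Fin d → ℂ} (hw : (toMat d w).rank ≤ 1) :
    ‖(toMat d w).trace‖ ^ 2 ≤ ∑ p, ‖w p‖ ^ 2 :=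
  (norm_trace_sq_le_of_rank_le_one hw).trans_eq (Fintype.sum_prod_type fun p => ‖w p‖ ^ 2).symm

lemma SchmidtNumberLE.ketDiag_one_dotProduct_mulVec_le_trace
    {ρ : Matrix (Fin d × Fin d) (Fin d × Fin d) ℂ} (hρ : SchmidtNumberLE d ρ 1) :
    star (ketDiag d 1) ⬝ᵥ ρ *ᵥ ketDiag d 1 ≤ ρ.trace := by
  obtain ⟨k, w, hw, rfl⟩ := hρ
  rw [sum_mulVec, dotProduct_sum, trace_sum]
  refine Finset.sum_le_sum fun m _ => ?_
  rw [ketDiag_one_dotProduct_vecMulVec_mulVec, trace_vecMulVec_self_star]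
  exact Complex.real_le_real.2 (norm_trace_toMat_sq_le_of_rank_le_one (hw m))

lemma SchmidtNumberLE.norm_trace_toMat_sq_le_of_add_posSemidef
    {ψ : Fin d × Fin d → ℂ} {σ : Matrix (Fin d × Fin d) (Fin d × Fin d) ℂ}
    (h : SchmidtNumberLE d (vecMulVec ψ (star ψ) + σ) 1) (hσ : σ.PosSemidef) :
    ‖(toMat d ψ).trace‖ ^ 2 ≤ ∑ p, ‖ψ p‖ ^ 2 + σ.trace.re := by
  have hsep := h.ketDiag_one_dotProduct_mulVec_le_trace
  rw [add_mulVec, dotProduct_add, ketDiag_one_dotProduct_vecMulVec_mulVec, trace_add,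
    trace_vecMulVec_self_star] at hsep
  have hpos := hσ.dotProduct_mulVec_nonneg (ketDiag d 1)
  exact (Complex.le_def.1 ((le_add_of_nonneg_right hpos).trans hsep)).1

/-- The product vector `Σ_{i,j} √(a_i a_j) ζ_i ζ̄_j |ij⟩` with the cube roots of unity
`ζ_i = exp (2πi x_i / 3)`. -/
noncomputable def phaseKet (a : Fin d → ℝ) (x : Fin d → ZMod 3) : Fin d × Fin d → ℂ :=
  fun p => (√(a p.1) * ZMod.stdAddChar (x p.1)) * (√(a p.2) * ZMod.stdAddChar (-x p.2))

lemma rank_toMat_phaseKet_le (a : Fin d → ℝ) (x : Fin d → ZMod 3) :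
    (toMat d (phaseKet a x)).rank ≤ 1 :=
  rank_vecMulVec_le (fun i => √(a i) * ZMod.stdAddChar (x i) : Fin d → ℂ)
    fun j => √(a j) * ZMod.stdAddChar (-x j)

lemma phaseKet_mul_star (a : Fin d → ℝ) (x : Fin d → ZMod 3) (i j k l : Fin d) :
    phaseKet a x (i, j) * star (phaseKet a x (k, l))
      = (√(a i) * √(a j) * √(a k) * √(a l) : ℝ) * phaseChar 3 i j k l x := by
  have hphase : phaseChar 3 i j k l x = ZMod.stdAddChar (x i) * ZMod.stdAddChar (-x j)
      * (ZMod.stdAddChar (-x k) * ZMod.stdAddChar (x l)) := by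
    simp only [phaseChar_apply, sub_eq_add_neg, AddChar.map_add_eq_mul, mul_assoc]
  have hstar (z : ZMod 3) : star (ZMod.stdAddChar z : ℂ) = ZMod.stdAddChar (-z) :=
    (AddChar.map_neg_eq_conj _ z).symm
  have hsqrt (i : Fin d) : star (√(a i) : ℂ) = √(a i) := Complex.conj_ofReal _
  simp only [phaseKet, star_mul', hstar, hsqrt, neg_neg, hphase, Complex.ofReal_mul]
  ring

lemma vecMulVec_ketDiag_add_diagonal_apply {a : Fin d → ℝ} (ha : ∀ i, 0 ≤ a i)
    (i j k l : Fin d) :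
    (vecMulVec (ketDiag d a) (star (ketDiag d a)) +
        diagonal fun p : Fin d × Fin d => if p.1 ≠ p.2 then ((a p.1 * a p.2 : ℝ) : ℂ) else 0)
        (i, j) (k, l)
      = if (i = j ∧ k = l) ∨ (i = k ∧ j = l) then ((√(a i) * √(a j) * √(a k) * √(a l) : ℝ) : ℂ)
        else 0 := by
  have hsqrt (i : Fin d) : (a i : ℂ) = √(a i) * √(a i) := by
    rw [← Complex.ofReal_mul, Real.mul_self_sqrt (ha i)]
  rw [star_ketDiag, Matrix.add_apply, vecMulVec_apply, diagonal_apply]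
  simp only [ketDiag, Prod.mk.injEq, Complex.ofReal_mul, hsqrt]
  obtain rfl | hij := eq_or_ne i j
  · obtain rfl | hkl := eq_or_ne k l
    · simp [mul_assoc]
    · have hik : ¬(i = k ∧ i = l) := fun h => hkl (h.1.symm.trans h.2)
      simp [hkl, hik]
  · by_cases hdiag : i = k ∧ j = l
    · obtain ⟨rfl, rfl⟩ := hdiag
      simp only [hij, ne_eq, not_false_eq_true, and_self, or_true, if_true, if_false, zero_mul,
        zero_add]
      ring
    · simp [hij, hdiag]

lemma sum_vecMulVec_phaseKet {a : Fin d → ℝ} (ha : ∀ i, 0 ≤ a i) :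
    ∑ x, vecMulVec (phaseKet a x) (star (phaseKet a x))
      = (3 ^ d : ℝ) • (vecMulVec (ketDiag d a) (star (ketDiag d a)) +
        diagonal fun p : Fin d × Fin d => if p.1 ≠ p.2 then ((a p.1 * a p.2 : ℝ) : ℂ) else 0) := by
  ext ⟨i, j⟩ ⟨k, l⟩
  rw [Matrix.sum_apply, Matrix.smul_apply, vecMulVec_ketDiag_add_diagonal_apply ha]
  simp only [vecMulVec_apply, Pi.star_apply, phaseKet_mul_star, ← Finset.mul_sum,
    sum_phaseChar (N := 3) (by decide), Fintype.card_fin]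
  split_ifs <;> simp [mul_comm]

lemma schmidtNumberLE_ketDiag_add_diagonal {a : Fin d → ℝ} (ha : ∀ i, 0 ≤ a i) :
    SchmidtNumberLE d
      (vecMulVec (ketDiag d a) (star (ketDiag d a)) +
        diagonal fun p : Fin d × Fin d => if p.1 ≠ p.2 then ((a p.1 * a p.2 : ℝ) : ℂ) else 0)
      1 := by
  have hsum := schmidtNumberLE_sum_vecMulVec (rank_toMat_phaseKet_le a)
  rw [sum_vecMulVec_phaseKet ha] at hsum
  simpa [smul_smul] using hsum.smul (r := (3 ^ d)⁻¹) (by positivity)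

end Separable

/-- Robustness of a pure state: (a) `ψψᴴ + Σ_{i≠j} a_i a_j |ij⟩⟨ij|` is separable;
(b) no trace-one psd `σ` does better than `t = (Σ_i a_i)² - 1`. -/
theorem robustness_pure_state (d : ℕ) (hd : 2 ≤ d)
    (a : Fin d → ℝ) (ha : ∀ i, 0 ≤ a i) (hnorm : ∑ i, a i ^ 2 = 1) :
    SchmidtNumberLE d
      (Matrix.vecMulVec (ketDiag d a) (star (ketDiag d a)) +
        Matrix.diagonal (fun p : Fin d × Fin d =>
          if p.1 ≠ p.2 then ((a p.1 * a p.2 : ℝ) : ℂ) else 0)) 1 ∧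
    ∀ (σ : Matrix (Fin d × Fin d) (Fin d × Fin d) ℂ), σ.PosSemidef → σ.trace = 1 →
      ∀ t : ℝ, 0 ≤ t →
        SchmidtNumberLE d
          (Matrix.vecMulVec (ketDiag d a) (star (ketDiag d a)) + t • σ) 1 →
        (∑ i, a i) ^ 2 - 1 ≤ t := by
  refine ⟨schmidtNumberLE_ketDiag_add_diagonal ha, fun σ hσ htr t ht hsep => ?_⟩
  have hbound := hsep.norm_trace_toMat_sq_le_of_add_posSemidef (hσ.smul ht)
  rw [trace_toMat_ketDiag, sum_norm_sq_ketDiag, hnorm, trace_smul, htr, Complex.norm_real,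
    Real.norm_eq_abs, sq_abs, Complex.smul_re, Complex.one_re, smul_eq_mul, mul_one] at hbound
  linarith
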